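/- For the complete elliptic integrals of the first and second kind, the inequality $1 - \gamma^2 < \frac{E(\gamma)}{K(\gamma)} < 1 - \frac{\gamma^2}{2}$ holds for all $\gamma \in (0,1)$. -/

import Mathlib

/-!
For every constant `c`,
`E(γ) - (1 - c γ²) K(γ) = γ² ∫₀¹ (c - t²) / √((1 - t²)(1 - γ² t²)) dt`,
so both bounds are statements about the sign of the integral on the right. For `c = 1` the integrand
is positive. For `c = 1/2` it is not, but `(t² - 1/2) / √(1 - t²)` has integral zero over `[0, 1]`
and changes sign once, from negative to positive; the increasing factor `1 / √(1 - γ² t²)` therefore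
puts more weight on its positive part.
-/

open Real Set

/-- Complete elliptic integral of the first kind. -/
noncomputable def ellK (γ : ℝ) : ℝ :=
  ∫ t in (0:ℝ)..1, 1 / Real.sqrt ((1 - t^2) * (1 - γ^2 * t^2))

/-- Complete elliptic integral of the second kind. -/
noncomputable def ellE (γ : ℝ) : ℝ :=
  ∫ t in (0:ℝ)..1, Real.sqrt (1 - γ^2 * t^2) / Real.sqrt (1 - t^2)

open MeasureTheory intervalIntegral

theorem integral_mul_pos_of_integral_eq_zero {f g : ℝ → ℝ} {a b c : ℝ} (hc : c ∈ Ioo a b)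
    (hf : IntervalIntegrable f volume a b)
    (hfg : IntervalIntegrable (fun t ↦ f t * g t) volume a b)
    (hf_zero : ∫ t in a..b, f t = 0) (hf_neg : ∀ t ∈ Ioo a c, f t < 0)
    (hf_pos : ∀ t ∈ Ioo c b, 0 < f t) (hg : StrictMonoOn g (Ioo a b)) :
    0 < ∫ t in a..b, f t * g t := by
  -- As `∫ f = 0`, subtracting `g c` from `g` changes nothing, and `g - g c` has the sign of `f`.
  have h_int : IntervalIntegrable (fun t ↦ f t * g t - f t * g c) volume a b :=
    hfg.sub (hf.mul_const _)
  have hc_mem : c ∈ uIcc a b := Icc_subset_uIcc (Ioo_subset_Icc_self hc)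
  have h_left : IntervalIntegrable (fun t ↦ f t * g t - f t * g c) volume a c :=
    h_int.mono_set (uIcc_subset_uIcc_left hc_mem)
  have h_right : IntervalIntegrable (fun t ↦ f t * g t - f t * g c) volume c b :=
    h_int.mono_set (uIcc_subset_uIcc_right hc_mem)
  calc
    0 < (∫ t in a..c, (f t * g t - f t * g c)) + ∫ t in c..b, (f t * g t - f t * g c) := by
      refine add_pos (intervalIntegral_pos_of_pos_on h_left (fun t ht ↦ ?_) hc.1)
        (intervalIntegral_pos_of_pos_on h_right (fun t ht ↦ ?_) hc.2)
      · have hgt : g t < g c := hg ⟨ht.1, ht.2.trans hc.2⟩ hc ht.2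
        exact sub_pos.2 (mul_lt_mul_of_neg_left hgt (hf_neg t ht))
      · have hgt : g c < g t := hg hc ⟨hc.1.trans ht.1, ht.2⟩ ht.1
        exact sub_pos.2 (mul_lt_mul_of_pos_left hgt (hf_pos t ht))
    _ = ∫ t in a..b, (f t * g t - f t * g c) := integral_add_adjacent_intervals h_left h_right
    _ = ∫ t in a..b, f t * g t := by
      rw [integral_sub hfg (hf.mul_const _), intervalIntegral.integral_mul_const, hf_zero,
        zero_mul, sub_zero]

theorem intervalIntegrable_div_sqrt_one_sub_sq {f : ℝ → ℝ} {a b : ℝ} (ha : a ∈ Icc (-1) 1)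
    (hb : b ∈ Icc (-1) 1) (hf : ContinuousOn f (uIcc a b)) :
    IntervalIntegrable (fun t ↦ f t / √(1 - t ^ 2)) volume a b := by
  have h_sub : uIcc a b ⊆ uIcc (-1) 1 :=
    uIcc_subset_uIcc (Icc_subset_uIcc ha) (Icc_subset_uIcc hb)
  simpa only [div_eq_mul_inv, sqrt_inv] using
    (Polynomial.Chebyshev.intervalIntegrable_sqrt_one_sub_sq_inv.mono_set h_sub).continuousOn_mul hf

theorem one_sub_sq_pos_of_mem_Ioo {x : ℝ} (hx : x ∈ Ioo (-1) 1) : 0 < 1 - x ^ 2 :=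
  sub_pos.2 ((sq_lt_one_iff_abs_lt_one x).2 (abs_lt.2 hx))

theorem hasDerivAt_mul_sqrt_one_sub_sq {x : ℝ} (hx : x ∈ Ioo (-1) 1) :
    HasDerivAt (fun t ↦ t * √(1 - t ^ 2)) ((1 - 2 * x ^ 2) / √(1 - x ^ 2)) x := by
  have h_pos : 0 < 1 - x ^ 2 := one_sub_sq_pos_of_mem_Ioo hx
  have h_inner : HasDerivAt (fun t : ℝ ↦ 1 - t ^ 2) (-(2 * x)) x := by
    simpa using (hasDerivAt_pow 2 x).const_sub 1
  refine ((hasDerivAt_id' x).mul (h_inner.sqrt h_pos.ne')).congr_deriv ?_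
  field_simp [(sqrt_pos.2 h_pos).ne']
  rw [sq_sqrt h_pos.le]
  ring

theorem integral_one_sub_two_mul_sq_div_sqrt_one_sub_sq {a b : ℝ} (ha : a ∈ Icc (-1) 1)
    (hb : b ∈ Icc (-1) 1) :
    ∫ t in a..b, (1 - 2 * t ^ 2) / √(1 - t ^ 2) = b * √(1 - b ^ 2) - a * √(1 - a ^ 2) := by
  refine integral_eq_sub_of_hasDeriv_right (f := fun t ↦ t * √(1 - t ^ 2)) (by fun_prop)
    (fun x hx ↦ (hasDerivAt_mul_sqrt_one_sub_sq ?_).hasDerivWithinAt)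
    (intervalIntegrable_div_sqrt_one_sub_sq ha hb (by fun_prop))
  exact ⟨(le_min ha.1 hb.1).trans_lt hx.1, hx.2.trans_le (max_le ha.2 hb.2)⟩

theorem integral_sq_sub_half_div_sqrt_one_sub_sq :
    ∫ t in 0..1, (t ^ 2 - 1 / 2) / √(1 - t ^ 2) = 0 := by
  calc
    ∫ t in 0..1, (t ^ 2 - 1 / 2) / √(1 - t ^ 2)
      = ∫ t in 0..1, -(1 / 2) * ((1 - 2 * t ^ 2) / √(1 - t ^ 2)) :=
        integral_congr fun t _ ↦ by ring
    _ = 0 := by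
      rw [intervalIntegral.integral_const_mul,
        integral_one_sub_two_mul_sq_div_sqrt_one_sub_sq (by simp) (by simp)]
      simp

/-- The radical `√((1 - t²)(1 - γ² t²))` of the Legendre curve, the common denominator of the
elliptic integrands of modulus `γ`. -/
noncomputable def legendreRadical (γ t : ℝ) : ℝ :=
  √((1 - t ^ 2) * (1 - γ ^ 2 * t ^ 2))

section Modulus

variable {γ : ℝ}

theorem one_sub_sq_mul_sq_pos {t : ℝ} (hγ : |γ| < 1) (ht : t ∈ Icc (-1) 1) :
    0 < 1 - γ ^ 2 * t ^ 2 := by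
  have hγ_sq : γ ^ 2 < 1 := (sq_lt_one_iff_abs_lt_one γ).2 hγ
  have ht_sq : t ^ 2 ≤ 1 := (sq_le_one_iff_abs_le_one t).2 (abs_le.2 ht)
  nlinarith [sq_nonneg γ]

theorem strictMonoOn_inv_sqrt_one_sub_sq_mul_sq (hγ_ne : γ ≠ 0) (hγ : |γ| < 1) :
    StrictMonoOn (fun t ↦ (√(1 - γ ^ 2 * t ^ 2))⁻¹) (Icc 0 1) := by
  intro s hs t ht hst
  have ht_pos : 0 < 1 - γ ^ 2 * t ^ 2 := one_sub_sq_mul_sq_pos hγ ⟨by linarith [ht.1], ht.2⟩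
  have h_sq : s ^ 2 < t ^ 2 := pow_lt_pow_left₀ hst hs.1 two_ne_zero
  have h_lt : 1 - γ ^ 2 * t ^ 2 < 1 - γ ^ 2 * s ^ 2 :=
    sub_lt_sub_left (mul_lt_mul_of_pos_left h_sq (by positivity)) 1
  exact inv_strictAnti₀ (sqrt_pos.2 ht_pos) (sqrt_lt_sqrt ht_pos.le h_lt)

theorem legendreRadical_pos {t : ℝ} (hγ : |γ| < 1) (ht : t ∈ Ioo (-1) 1) :
    0 < legendreRadical γ t :=
  sqrt_pos.2 (mul_pos (one_sub_sq_pos_of_mem_Ioo ht)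
    (one_sub_sq_mul_sq_pos hγ (Ioo_subset_Icc_self ht)))

theorem div_sqrt_mul_inv_sqrt_eq_div_legendreRadical {t : ℝ} (hγ : |γ| < 1)
    (ht : t ∈ Icc (-1) 1) (x : ℝ) :
    x / √(1 - t ^ 2) * (√(1 - γ ^ 2 * t ^ 2))⁻¹ = x / legendreRadical γ t := by
  rw [legendreRadical, sqrt_mul' _ (one_sub_sq_mul_sq_pos hγ ht).le, ← div_eq_mul_inv, div_div]

theorem intervalIntegrable_div_legendreRadical {f : ℝ → ℝ} {a b : ℝ} (hγ : |γ| < 1)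
    (ha : a ∈ Icc (-1) 1) (hb : b ∈ Icc (-1) 1) (hf : ContinuousOn f (uIcc a b)) :
    IntervalIntegrable (fun t ↦ f t / legendreRadical γ t) volume a b := by
  have h_sub : uIcc a b ⊆ Icc (-1) 1 := uIcc_subset_Icc ha hb
  have h_cont : ContinuousOn (fun t ↦ (√(1 - γ ^ 2 * t ^ 2))⁻¹) (uIcc a b) :=
    ContinuousOn.inv₀ (by fun_prop)
      fun t ht ↦ (sqrt_pos.2 (one_sub_sq_mul_sq_pos hγ (h_sub ht))).ne'
  exact ((intervalIntegrable_div_sqrt_one_sub_sq ha hb hf).mul_continuousOn h_cont).congr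
    fun t ht ↦ div_sqrt_mul_inv_sqrt_eq_div_legendreRadical hγ (h_sub (uIoc_subset_uIcc ht)) (f t)

theorem ellK_eq_integral_div_legendreRadical (γ : ℝ) :
    ellK γ = ∫ t in 0..1, 1 / legendreRadical γ t :=
  rfl

theorem ellE_eq_integral_div_legendreRadical (hγ : |γ| < 1) :
    ellE γ = ∫ t in 0..1, (1 - γ ^ 2 * t ^ 2) / legendreRadical γ t := by
  refine integral_congr fun t ht ↦ ?_
  have ht_mem : t ∈ Icc (-1) 1 := uIcc_subset_Icc (by simp) (by simp) ht
  rw [← div_sqrt_mul_inv_sqrt_eq_div_legendreRadical hγ ht_mem, div_mul_eq_mul_div,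
    ← div_eq_mul_inv, div_sqrt]

theorem integral_div_legendreRadical_pos {f : ℝ → ℝ} {a b : ℝ} (hγ : |γ| < 1)
    (ha : a ∈ Icc (-1) 1) (hb : b ∈ Icc (-1) 1) (hab : a < b) (hf : ContinuousOn f (uIcc a b))
    (hf_pos : ∀ t ∈ Ioo a b, 0 < f t) :
    0 < ∫ t in a..b, f t / legendreRadical γ t :=
  intervalIntegral_pos_of_pos_on (intervalIntegrable_div_legendreRadical hγ ha hb hf)
    (fun t ht ↦ div_pos (hf_pos t ht)
      (legendreRadical_pos hγ ⟨ha.1.trans_lt ht.1, ht.2.trans_le hb.2⟩)) hab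

theorem ellK_pos (hγ : |γ| < 1) : 0 < ellK γ :=
  integral_div_legendreRadical_pos hγ (by simp) (by simp) one_pos continuousOn_const
    fun _ _ ↦ one_pos

theorem ellE_sub_one_sub_mul_sq_mul_ellK (hγ : |γ| < 1) (c : ℝ) :
    ellE γ - (1 - c * γ ^ 2) * ellK γ =
      γ ^ 2 * ∫ t in 0..1, (c - t ^ 2) / legendreRadical γ t := by
  rw [ellE_eq_integral_div_legendreRadical hγ, ellK_eq_integral_div_legendreRadical,
    ← intervalIntegral.integral_const_mul, ← intervalIntegral.integral_const_mul,
    ← integral_sub (intervalIntegrable_div_legendreRadical hγ (by simp) (by simp) (by fun_prop))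
      ((intervalIntegrable_div_legendreRadical hγ (by simp) (by simp)
        continuousOn_const).const_mul _)]
  refine integral_congr fun t _ ↦ ?_
  ring

theorem integral_one_sub_sq_div_legendreRadical_pos (hγ : |γ| < 1) :
    0 < ∫ t in 0..1, (1 - t ^ 2) / legendreRadical γ t :=
  integral_div_legendreRadical_pos hγ (by simp) (by simp) one_pos (by fun_prop)
    fun _ ht ↦ one_sub_sq_pos_of_mem_Ioo ⟨by linarith [ht.1], ht.2⟩

theorem integral_sq_sub_half_div_legendreRadical_pos (hγ_ne : γ ≠ 0) (hγ : |γ| < 1) :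
    0 < ∫ t in 0..1, (t ^ 2 - 1 / 2) / legendreRadical γ t := by
  have h_factor : EqOn (fun t ↦ (t ^ 2 - 1 / 2) / legendreRadical γ t)
      (fun t ↦ (t ^ 2 - 1 / 2) / √(1 - t ^ 2) * (√(1 - γ ^ 2 * t ^ 2))⁻¹) (uIcc 0 1) :=
    fun t ht ↦ (div_sqrt_mul_inv_sqrt_eq_div_legendreRadical hγ
      (uIcc_subset_Icc (by simp) (by simp) ht) _).symm
  have h_root : √(1 / 2) ∈ Ioo (0 : ℝ) 1 :=
    ⟨by positivity, (sqrt_lt' one_pos).2 (by norm_num)⟩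
  rw [integral_congr h_factor]
  refine integral_mul_pos_of_integral_eq_zero h_root
    (intervalIntegrable_div_sqrt_one_sub_sq (by simp) (by simp) (by fun_prop))
    ((intervalIntegrable_div_legendreRadical hγ (by simp) (by simp) (by fun_prop)).congr
      (h_factor.mono uIoc_subset_uIcc))
    integral_sq_sub_half_div_sqrt_one_sub_sq (fun t ht ↦ ?_) (fun t ht ↦ ?_)
    ((strictMonoOn_inv_sqrt_one_sub_sq_mul_sq hγ_ne hγ).mono Ioo_subset_Icc_self)
  · have h_sq : t ^ 2 < 1 / 2 := (lt_sqrt ht.1.le).1 ht.2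
    exact div_neg_of_neg_of_pos (by linarith) (sqrt_pos.2 (by linarith))
  · have ht_pos : 0 < t := h_root.1.trans ht.1
    have h_sq : 1 / 2 < t ^ 2 := (sqrt_lt' ht_pos).1 ht.1
    exact div_pos (by linarith)
      (sqrt_pos.2 (one_sub_sq_pos_of_mem_Ioo ⟨by linarith, ht.2⟩))

theorem integral_half_sub_sq_div_legendreRadical_neg (hγ_ne : γ ≠ 0) (hγ : |γ| < 1) :
    ∫ t in 0..1, (1 / 2 - t ^ 2) / legendreRadical γ t < 0 := by
  calc
    ∫ t in 0..1, (1 / 2 - t ^ 2) / legendreRadical γ t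
      = -∫ t in 0..1, (t ^ 2 - 1 / 2) / legendreRadical γ t := by
        rw [← intervalIntegral.integral_neg]
        exact integral_congr fun t _ ↦ by ring
    _ < 0 := neg_neg_of_pos (integral_sq_sub_half_div_legendreRadical_pos hγ_ne hγ)

theorem one_sub_sq_mul_ellK_lt_ellE (hγ_ne : γ ≠ 0) (hγ : |γ| < 1) :
    (1 - γ ^ 2) * ellK γ < ellE γ := by
  have h_eq := ellE_sub_one_sub_mul_sq_mul_ellK hγ 1
  rw [one_mul] at h_eq
  rw [← sub_pos, h_eq]
  exact mul_pos (by positivity) (integral_one_sub_sq_div_legendreRadical_pos hγ)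

theorem ellE_lt_one_sub_sq_div_two_mul_ellK (hγ_ne : γ ≠ 0) (hγ : |γ| < 1) :
    ellE γ < (1 - γ ^ 2 / 2) * ellK γ := by
  have h_eq := ellE_sub_one_sub_mul_sq_mul_ellK hγ (1 / 2)
  rw [one_div_mul_eq_div] at h_eq
  rw [← sub_neg, h_eq]
  exact mul_neg_of_pos_of_neg (by positivity)
    (integral_half_sub_sq_div_legendreRadical_neg hγ_ne hγ)

theorem ellE_div_ellK_bounds_general (γ : ℝ) (hγ_ne : γ ≠ 0) (hγ : |γ| < 1) :
    1 - γ ^ 2 < ellE γ / ellK γ ∧ ellE γ / ellK γ < 1 - γ ^ 2 / 2 :=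
  ⟨(lt_div_iff₀ (ellK_pos hγ)).2 (one_sub_sq_mul_ellK_lt_ellE hγ_ne hγ),
    (div_lt_iff₀ (ellK_pos hγ)).2 (ellE_lt_one_sub_sq_div_two_mul_ellK hγ_ne hγ)⟩

end Modulus

/-- For all `γ ∈ (0,1)`, `1 - γ² < E(γ)/K(γ) < 1 - γ²/2`. -/
theorem ellE_div_ellK_bounds (γ : ℝ) (hγ : γ ∈ Set.Ioo (0:ℝ) 1) :
    1 - γ^2 < ellE γ / ellK γ ∧ ellE γ / ellK γ < 1 - γ^2 / 2 :=
  ellE_div_ellK_bounds_general γ hγ.1.ne' (abs_lt.2 ⟨by linarith [hγ.1], hγ.2⟩)
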